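/- An ADE configuration (α,δ,ε) satisfies m(𝒞) = 24 and ρ(𝒞) ≤ 19 if and only if it is one of the following eighteen configurations: 16A₁; 9A₂; 6A₁+4A₃; 5A₁+4A₂+A₅; 2A₁+3A₃+2D₄; 3A₁+4D₄; A₁+6A₃; A₁+2A₂+3A₃+D₅; A₁+4A₂+D₄+E₆; 4A₂+2A₃+A₅; 11A₁+2A₃; 7A₁+A₃+2D₄; 5A₁+A₃+A₇+D₄; 6A₁+2A₂+A₃+D₅; 5A₁+A₂+D₄+D₈; 5A₁+A₃+A₄+D₇; 2A₁+2A₂+2D₄+D₅; A₁+4A₂+2D₅. -/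

import Mathlib

/- STATEMENT 15: An ADE configuration (α,δ,ε) satisfies m(𝒞) = 24 and ρ(𝒞) ≤ 19 if and
only if it is one of the eighteen listed configurations. -/

open Finsupp

/-- The Milnor-type invariant
`m(𝒞) = Σ (α_n+δ_n+ε_n)(n+1) − Σ α_n/(n+1) − Σ_{n≥4} δ_n/(4(n−2)) − ε₆/24 − ε₇/48 − ε₈/120`
of an ADE configuration `𝒞 = Σ α_n A_n + δ_n D_n + ε_n E_n`. -/
noncomputable def mADE (a d e : ℕ →₀ ℕ) : ℚ :=
  (a.sum fun n m => (m : ℚ) * (n + 1)) + (d.sum fun n m => (m : ℚ) * (n + 1)) +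
    (e.sum fun n m => (m : ℚ) * (n + 1)) -
  (a.sum fun n m => (m : ℚ) / (n + 1)) -
  (d.sum fun n m => (m : ℚ) / (4 * ((n : ℚ) - 2))) -
  (e 6 : ℚ) / 24 - (e 7 : ℚ) / 48 - (e 8 : ℚ) / 120

/-- The rank `ρ(𝒞) = Σ n(α_n + δ_n + ε_n)` of an ADE configuration. -/
def rhoADE (a d e : ℕ →₀ ℕ) : ℕ :=
  (a.sum fun n m => n * m) + (d.sum fun n m => n * m) + (e.sum fun n m => n * m)

/-!
The rank `n` and the contribution `n + 1 - 1 / |G|` of a singularity of type `Aₙ`, `Dₙ` or `Eₙ`,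
where `G` is its binary polyhedral group, are weights on the set of ADE types, and `ρ` and `m` are
the corresponding weighted sums over a configuration. As ranks are positive, only finitely many
configurations (7574) have rank at most 19, and `m` is computed for each of them.
-/

section BoundedWeight

variable {ι M : Type*} [AddCommMonoid M]

/-- The finitely supported function `∑ kᵢ • tᵢ` given by the list of pairs `(tᵢ, kᵢ)`. -/
noncomputable def formalSum (l : List (ι × ℕ)) : ι →₀ ℕ :=
  (l.map fun p => single p.1 p.2).sum

theorem formalSum_append_singleton (l : List (ι × ℕ)) (t : ι) (k : ℕ) :
    formalSum (l ++ [(t, k)]) = formalSum l + single t k := by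
  simp [formalSum]

theorem weight_formalSum (w : ι → M) (l : List (ι × ℕ)) :
    weight w (formalSum l) = (l.map fun p => p.2 • w p.1).sum := by
  simp only [formalSum, map_list_sum, List.map_map, Function.comp_def, weight_single]

/-- The formal sums `∑ kᵢ • tᵢ` with `∑ kᵢ * r tᵢ ≤ R` over a list of labels `tᵢ`. This is a
computable enumeration of the functions of weight at most `R`. Zero coefficients are left out, and
the labels of each sum appear in reverse order. -/
def boundedFormalSums (r : ι → ℕ) : List ι → ℕ → List (List (ι × ℕ))
  | [], _ => [[]]
  | t :: ts, R =>
    ((List.range (R / r t)).flatMap fun k =>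
      (boundedFormalSums r ts (R - (k + 1) * r t)).map (· ++ [(t, k + 1)])) ++
    boundedFormalSums r ts R

theorem mem_map_boundedFormalSums_cons (r : ι → ℕ) (t : ι) (ts : List ι) (R : ℕ) (f : ι →₀ ℕ) :
    f ∈ (boundedFormalSums r (t :: ts) R).map formalSum ↔
      ∃ k ≤ R / r t, ∃ g ∈ (boundedFormalSums r ts (R - k * r t)).map formalSum,
        g + single t k = f := by
  simp only [boundedFormalSums, List.map_append, List.map_flatMap, List.map_map,
    Function.comp_def, formalSum_append_singleton, List.mem_append, List.mem_flatMap,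
    List.mem_range, List.mem_map, exists_exists_and_eq_and]
  constructor
  · rintro (⟨k, hk, l, hl, rfl⟩ | ⟨l, hl, rfl⟩)
    · exact ⟨k + 1, hk, l, hl, rfl⟩
    · exact ⟨0, zero_le, l, by simpa using hl, by simp⟩
  · rintro ⟨_ | k, hk, l, hl, rfl⟩
    · exact Or.inr ⟨l, by simpa using hl, by simp⟩
    · exact Or.inl ⟨k, hk, l, hl, rfl⟩

theorem mem_map_boundedFormalSums {r : ι → ℕ} {ts : List ι} (hr : ∀ t ∈ ts, 0 < r t) (R : ℕ)
    (f : ι →₀ ℕ) :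
    f ∈ (boundedFormalSums r ts R).map formalSum ↔ (∀ t, f t ≠ 0 → t ∈ ts) ∧ weight r f ≤ R := by
  classical
  induction ts generalizing R f with
  | nil =>
    suffices f = 0 ↔ (∀ t, f t = 0) ∧ weight r f ≤ R by
      simpa [boundedFormalSums, formalSum, eq_comm] using this
    exact ⟨by rintro rfl; simp, fun h => Finsupp.ext h.1⟩
  | cons t ts ih =>
    obtain ⟨ht, hts⟩ := List.forall_mem_cons.1 hr
    simp only [mem_map_boundedFormalSums_cons, ih hts, Nat.le_div_iff_mul_le ht]
    constructor
    · rintro ⟨k, hk, g, ⟨hg, hgR⟩, rfl⟩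
      refine ⟨by grind [Finsupp.add_apply], ?_⟩
      rw [map_add, weight_single, smul_eq_mul]
      omega
    · rintro ⟨hf, hfR⟩
      rw [← erase_add_single t f, map_add, weight_single, smul_eq_mul] at hfR
      exact ⟨f t, by omega, f.erase t, ⟨by grind, by omega⟩, erase_add_single t f⟩

theorem mem_map_filter_boundedFormalSums [DecidableEq M] {r : ι → ℕ} {ts : List ι}
    (hr : ∀ t ∈ ts, 0 < r t) (R : ℕ) (w : ι → M) (m : M) (f : ι →₀ ℕ) :
    f ∈ ((boundedFormalSums r ts R).filter
        fun l => (l.map fun p => p.2 • w p.1).sum = m).map formalSum ↔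
      ((∀ t, f t ≠ 0 → t ∈ ts) ∧ weight r f ≤ R) ∧ weight w f = m := by
  rw [← mem_map_boundedFormalSums hr]
  simp only [List.mem_map, List.mem_filter, decide_eq_true_eq, ← weight_formalSum]
  grind

end BoundedWeight

/-- The labels `Aₙ`, `Dₙ` and `Eₙ` for arbitrary natural numbers `n`, so that an ADE configuration
is a finitely supported function on this type. Those which label a Dynkin diagram are singled out
by `ADELabel.IsDynkin`. -/
abbrev ADELabel : Type := ℕ ⊕ ℕ ⊕ ℕ

namespace ADELabel

/-- The label `Aₙ`. -/
abbrev A (n : ℕ) : ADELabel := .inl n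

/-- The label `Dₙ`. -/
abbrev D (n : ℕ) : ADELabel := .inr (.inl n)

/-- The label `Eₙ`. -/
abbrev E (n : ℕ) : ADELabel := .inr (.inr n)

/-- The condition on the subscript of a label for it to name a simply laced Dynkin diagram, each
diagram being named once: `D₃ = A₃` and `E₅ = D₅`, for example, are excluded. -/
def IsDynkin : ADELabel → Prop :=
  Sum.elim (1 ≤ ·) (Sum.elim (4 ≤ ·) (· ∈ [6, 7, 8]))

/-- The number of vertices of the Dynkin diagram. -/
def rank : ADELabel → ℕ :=
  Sum.elim id (Sum.elim id id)

/-- The orders of the binary tetrahedral, octahedral and icosahedral groups, which belong to `E₆`,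
`E₇` and `E₈`. The other values are junk. -/
def groupOrderE : ℕ → ℚ
  | 6 => 24
  | 7 => 48
  | 8 => 120
  | _ => 0

/-- The order of the binary polyhedral group `G ⊆ SL₂(ℂ)` for which `ℂ² / G` is the singularity
with the given label. -/
def groupOrder : ADELabel → ℚ :=
  Sum.elim (fun n => n + 1) (Sum.elim (fun n => 4 * (n - 2)) groupOrderE)

/-- The contribution of one singularity to the Milnor-type invariant `m`. -/
def milnor (t : ADELabel) : ℚ :=
  t.rank + 1 - 1 / t.groupOrder

theorem IsDynkin.rank_pos {t : ADELabel} (ht : t.IsDynkin) : 0 < t.rank := by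
  rcases t with n | n | n <;> simp [IsDynkin, rank] at ht ⊢ <;> omega

/-- The labels of Dynkin diagrams of rank at most `R`. Within each series the ranks decrease, which
keeps the number of partial sums visited by `boundedFormalSums` small. -/
def dynkinLabels (R : ℕ) : List ADELabel :=
  ((List.range' 1 R).map A ++ (List.range' 4 (R - 3)).map D ++
    ([6, 7, 8].filter (· ≤ R)).map E).reverse

theorem mem_dynkinLabels {R : ℕ} {t : ADELabel} :
    t ∈ dynkinLabels R ↔ t.IsDynkin ∧ t.rank ≤ R := by
  rcases t with n | n | n <;> simp [dynkinLabels, IsDynkin, rank] <;> omega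

/-- The eighteen configurations of the classification, as formal sums. -/
def solutions : List (List (ADELabel × ℕ)) :=
  [[(A 1, 16)],
    [(A 2, 9)],
    [(A 1, 6), (A 3, 4)],
    [(A 1, 5), (A 2, 4), (A 5, 1)],
    [(A 1, 2), (A 3, 3), (D 4, 2)],
    [(A 1, 3), (D 4, 4)],
    [(A 1, 1), (A 3, 6)],
    [(A 1, 1), (A 2, 2), (A 3, 3), (D 5, 1)],
    [(A 1, 1), (A 2, 4), (D 4, 1), (E 6, 1)],
    [(A 2, 4), (A 3, 2), (A 5, 1)],
    [(A 1, 11), (A 3, 2)],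
    [(A 1, 7), (A 3, 1), (D 4, 2)],
    [(A 1, 5), (A 3, 1), (A 7, 1), (D 4, 1)],
    [(A 1, 6), (A 2, 2), (A 3, 1), (D 5, 1)],
    [(A 1, 5), (A 2, 1), (D 4, 1), (D 8, 1)],
    [(A 1, 5), (A 3, 1), (A 4, 1), (D 7, 1)],
    [(A 1, 2), (A 2, 2), (D 4, 2), (D 5, 1)],
    [(A 1, 1), (A 2, 4), (D 5, 2)]]

theorem filter_boundedFormalSums_perm_solutions :
    ((boundedFormalSums rank (dynkinLabels 19) 19).filter
      fun l => (l.map fun p => p.2 • p.1.milnor).sum = 24).Perm solutions := by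
  decide +kernel

theorem weight_milnor_eq_24_and_weight_rank_le_19_iff {f : ADELabel →₀ ℕ}
    (hf : ∀ t, f t ≠ 0 → t.IsDynkin) :
    weight milnor f = 24 ∧ weight rank f ≤ 19 ↔ f ∈ solutions.map formalSum := by
  have hmem : weight rank f ≤ 19 → ∀ t, f t ≠ 0 → t ∈ dynkinLabels 19 := fun h t ht =>
    mem_dynkinLabels.2 ⟨hf t ht, (le_weight_of_ne_zero' rank ht).trans h⟩
  rw [← (filter_boundedFormalSums_perm_solutions.map formalSum).mem_iff,
    mem_map_filter_boundedFormalSums fun _ ht => (mem_dynkinLabels.1 ht).1.rank_pos,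
    and_iff_right_of_imp hmem, and_comm]

end ADELabel

open ADELabel

/-- The ADE configuration `∑ aₙ Aₙ + dₙ Dₙ + eₙ Eₙ`, as a single function on labels. -/
noncomputable def adeConfiguration (a d e : ℕ →₀ ℕ) : ADELabel →₀ ℕ :=
  a.sumElim (d.sumElim e)

section Configuration

variable {a d e : ℕ →₀ ℕ}

theorem adeConfiguration_inj {a' d' e' : ℕ →₀ ℕ} :
    adeConfiguration a d e = adeConfiguration a' d' e' ↔ a = a' ∧ d = d' ∧ e = e' := by
  have sumElim_inj {ι κ : Type} {f f' : ι →₀ ℕ} {g g' : κ →₀ ℕ} :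
      f.sumElim g = f'.sumElim g' ↔ f = f' ∧ g = g' :=
    (sumFinsuppEquivProdFinsupp.symm.injective.eq_iff (a := (f, g)) (b := (f', g'))).trans
      Prod.mk_inj
  simp only [adeConfiguration, sumElim_inj]

theorem adeConfiguration_add (a' d' e' : ℕ →₀ ℕ) :
    adeConfiguration a d e + adeConfiguration a' d' e' =
      adeConfiguration (a + a') (d + d') (e + e') := by
  simp only [adeConfiguration, sumElim_add]

theorem single_A (n k : ℕ) : single (A n) k = adeConfiguration (single n k) 0 0 := by
  simp [adeConfiguration]

theorem single_D (n k : ℕ) : single (D n) k = adeConfiguration 0 (single n k) 0 := by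
  simp [adeConfiguration]

theorem single_E (n k : ℕ) : single (E n) k = adeConfiguration 0 0 (single n k) := by
  simp [adeConfiguration]

theorem isDynkin_of_adeConfiguration_ne_zero (ha0 : a 0 = 0) (hd : ∀ n ≤ 3, d n = 0)
    (he : ∀ n : ℕ, n ≠ 6 → n ≠ 7 → n ≠ 8 → e n = 0) (t : ADELabel)
    (ht : adeConfiguration a d e t ≠ 0) : t.IsDynkin := by
  rcases t with n | n | n <;> simp [adeConfiguration, IsDynkin] at ht ⊢ <;> grind

theorem weight_adeConfiguration {M : Type*} [AddCommMonoid M] (w : ADELabel → M) :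
    weight w (adeConfiguration a d e) =
      (a.sum fun n k => k • w (A n)) + ((d.sum fun n k => k • w (D n)) +
        e.sum fun n k => k • w (E n)) := by
  rw [adeConfiguration, weight_apply, sum_sumElim, sum_sumElim]
  rfl

theorem rhoADE_eq_weight : rhoADE a d e = weight rank (adeConfiguration a d e) := by
  simp [rhoADE, weight_adeConfiguration, rank, mul_comm, add_assoc]

theorem mADE_eq_weight (he : ∀ n : ℕ, n ≠ 6 → n ≠ 7 → n ≠ 8 → e n = 0) :
    mADE a d e = weight milnor (adeConfiguration a d e) := by
  have hsplit (f : ℕ →₀ ℕ) (g : ℕ → ℚ) : (f.sum fun n k => k • ((n : ℚ) + 1 - 1 / g n)) =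
      (f.sum fun n k => (k : ℚ) * (n + 1)) - f.sum fun n k => (k : ℚ) / g n := by
    simp only [nsmul_eq_mul, mul_sub, mul_one_div, sum_sub]
  have hE : (e.sum fun n k => (k : ℚ) / groupOrderE n) = e 6 / 24 + e 7 / 48 + e 8 / 120 := by
    have hsupp : e.support ⊆ {6, 7, 8} := by grind
    rw [sum_of_support_subset e hsupp _ (by simp)]
    simp [groupOrderE, add_assoc]
  simp only [mADE, weight_adeConfiguration, milnor, rank, groupOrder, Sum.elim_inl, Sum.elim_inr,
    id, hsplit, hE]
  ring

end Configuration

theorem ade_configurations_with_m_eq_24_and_rank_le_19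
    (a d e : ℕ →₀ ℕ)
    (ha0 : a 0 = 0)
    (hd : ∀ n ≤ 3, d n = 0)
    (he : ∀ n : ℕ, n ≠ 6 → n ≠ 7 → n ≠ 8 → e n = 0) :
    (mADE a d e = 24 ∧ rhoADE a d e ≤ 19) ↔
      -- 16A₁
      ((a = single 1 16 ∧ d = 0 ∧ e = 0) ∨
      -- 9A₂
      (a = single 2 9 ∧ d = 0 ∧ e = 0) ∨
      -- 6A₁ + 4A₃
      (a = single 1 6 + single 3 4 ∧ d = 0 ∧ e = 0) ∨
      -- 5A₁ + 4A₂ + A₅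
      (a = single 1 5 + single 2 4 + single 5 1 ∧ d = 0 ∧ e = 0) ∨
      -- 2A₁ + 3A₃ + 2D₄
      (a = single 1 2 + single 3 3 ∧ d = single 4 2 ∧ e = 0) ∨
      -- 3A₁ + 4D₄
      (a = single 1 3 ∧ d = single 4 4 ∧ e = 0) ∨
      -- A₁ + 6A₃
      (a = single 1 1 + single 3 6 ∧ d = 0 ∧ e = 0) ∨
      -- A₁ + 2A₂ + 3A₃ + D₅
      (a = single 1 1 + single 2 2 + single 3 3 ∧ d = single 5 1 ∧ e = 0) ∨
      -- A₁ + 4A₂ + D₄ + E₆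
      (a = single 1 1 + single 2 4 ∧ d = single 4 1 ∧ e = single 6 1) ∨
      -- 4A₂ + 2A₃ + A₅
      (a = single 2 4 + single 3 2 + single 5 1 ∧ d = 0 ∧ e = 0) ∨
      -- 11A₁ + 2A₃
      (a = single 1 11 + single 3 2 ∧ d = 0 ∧ e = 0) ∨
      -- 7A₁ + A₃ + 2D₄
      (a = single 1 7 + single 3 1 ∧ d = single 4 2 ∧ e = 0) ∨
      -- 5A₁ + A₃ + A₇ + D₄
      (a = single 1 5 + single 3 1 + single 7 1 ∧ d = single 4 1 ∧ e = 0) ∨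
      -- 6A₁ + 2A₂ + A₃ + D₅
      (a = single 1 6 + single 2 2 + single 3 1 ∧ d = single 5 1 ∧ e = 0) ∨
      -- 5A₁ + A₂ + D₄ + D₈
      (a = single 1 5 + single 2 1 ∧ d = single 4 1 + single 8 1 ∧ e = 0) ∨
      -- 5A₁ + A₃ + A₄ + D₇
      (a = single 1 5 + single 3 1 + single 4 1 ∧ d = single 7 1 ∧ e = 0) ∨
      -- 2A₁ + 2A₂ + 2D₄ + D₅
      (a = single 1 2 + single 2 2 ∧ d = single 4 2 + single 5 1 ∧ e = 0) ∨
      -- A₁ + 4A₂ + 2D₅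
      (a = single 1 1 + single 2 4 ∧ d = single 5 2 ∧ e = 0)) := by
  rw [mADE_eq_weight he, rhoADE_eq_weight,
    weight_milnor_eq_24_and_weight_rank_le_19_iff
      (isDynkin_of_adeConfiguration_ne_zero ha0 hd he)]
  simp only [solutions, List.map_cons, List.map_nil, List.mem_cons, List.not_mem_nil, or_false,
    formalSum, List.sum_cons, List.sum_nil, single_A, single_D, single_E, adeConfiguration_add,
    adeConfiguration_inj, add_zero, zero_add, add_assoc]
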